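/- arXiv:1005.5638 — 4 statements merged into one kernel-verified Lean document; each statement's English description precedes it below -/
import Mathlib

section
/- Let (v¹, v², ξ₁, ξ₂, ξ₃) be a classical solution of the back-and-forth periodic system on [0,∞). Then for every t ≥ 0: ∫₀¹ (|∂ₓv¹(t,x)|² + |v²(t,x)|²) dx + γ₁·ξ₂(t)² + γ₁ω²·ξ₁(t)² + 2γ₁γ₂ω² · ∫₀ᵗ ξ₁(s)² ds = ∫₀¹ (|∂ₓv¹(0,x)|² + |v²(0,x)|²) dx + γ₁·ξ₂(0)² + γ₁ω²·ξ₁(0)². (This is the global-in-time energy identity (26) for the back-and-forth dynamics; in particular ξ₁ ∈ L²(0,∞) when ω ≠ 0.) -/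
open Set Filter MeasureTheory intervalIntegral

/-- A classical solution of the back-and-forth periodic system on `[0,∞)` with
switching period `T`: on each forward strip `[2kT,(2k+1)T]` it solves
`∂ₜv¹ = v²`, `∂ₜv² = ∂ₓₓv¹`, `ξ₁' = ξ₂ − γ₂ξ₁`, `ξ₂' = −ω²ξ₁ + ∂ₓv¹(·,0)`,
`ξ₃' = ξ₁`; on each backward strip `[(2k+1)T,(2k+2)T]` it solves the time-reversed
equations; it satisfies the boundary conditions `v¹(t,1) = 0` and
`v¹(t,0) = γ₁ξ₁(t) + γ₁γ₂ξ₃(t)`; it is continuous globally and `C²` (resp. `C¹`)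
on each strip (resp. interval), the derivatives on the strips being derivatives
within the strips. -/
structure BackAndForthSol (T ω γ₁ γ₂ : ℝ) where
  v1 : ℝ → ℝ → ℝ
  v2 : ℝ → ℝ → ℝ
  ξ1 : ℝ → ℝ
  ξ2 : ℝ → ℝ
  ξ3 : ℝ → ℝ
  cont_v1 : ContinuousOn (Function.uncurry v1) (Ici 0 ×ˢ Icc 0 1)
  cont_v2 : ContinuousOn (Function.uncurry v2) (Ici 0 ×ˢ Icc 0 1)
  cont_ξ1 : ContinuousOn ξ1 (Ici 0)
  cont_ξ2 : ContinuousOn ξ2 (Ici 0)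
  cont_ξ3 : ContinuousOn ξ3 (Ici 0)
  smooth_v1_fwd : ∀ k : ℕ, ContDiffOn ℝ 2 (Function.uncurry v1)
    (Icc (2 * (k:ℝ) * T) ((2 * (k:ℝ) + 1) * T) ×ˢ Icc (0:ℝ) 1)
  smooth_v2_fwd : ∀ k : ℕ, ContDiffOn ℝ 2 (Function.uncurry v2)
    (Icc (2 * (k:ℝ) * T) ((2 * (k:ℝ) + 1) * T) ×ˢ Icc (0:ℝ) 1)
  smooth_v1_bwd : ∀ k : ℕ, ContDiffOn ℝ 2 (Function.uncurry v1)
    (Icc ((2 * (k:ℝ) + 1) * T) ((2 * (k:ℝ) + 2) * T) ×ˢ Icc (0:ℝ) 1)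
  smooth_v2_bwd : ∀ k : ℕ, ContDiffOn ℝ 2 (Function.uncurry v2)
    (Icc ((2 * (k:ℝ) + 1) * T) ((2 * (k:ℝ) + 2) * T) ×ˢ Icc (0:ℝ) 1)
  smooth_ξ1_fwd : ∀ k : ℕ, ContDiffOn ℝ 1 ξ1 (Icc (2 * (k:ℝ) * T) ((2 * (k:ℝ) + 1) * T))
  smooth_ξ2_fwd : ∀ k : ℕ, ContDiffOn ℝ 1 ξ2 (Icc (2 * (k:ℝ) * T) ((2 * (k:ℝ) + 1) * T))
  smooth_ξ3_fwd : ∀ k : ℕ, ContDiffOn ℝ 1 ξ3 (Icc (2 * (k:ℝ) * T) ((2 * (k:ℝ) + 1) * T))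
  smooth_ξ1_bwd : ∀ k : ℕ, ContDiffOn ℝ 1 ξ1 (Icc ((2 * (k:ℝ) + 1) * T) ((2 * (k:ℝ) + 2) * T))
  smooth_ξ2_bwd : ∀ k : ℕ, ContDiffOn ℝ 1 ξ2 (Icc ((2 * (k:ℝ) + 1) * T) ((2 * (k:ℝ) + 2) * T))
  smooth_ξ3_bwd : ∀ k : ℕ, ContDiffOn ℝ 1 ξ3 (Icc ((2 * (k:ℝ) + 1) * T) ((2 * (k:ℝ) + 2) * T))
  pde1_fwd : ∀ k : ℕ, ∀ t ∈ Icc (2 * (k:ℝ) * T) ((2 * (k:ℝ) + 1) * T),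
    ∀ x ∈ Icc (0:ℝ) 1,
    derivWithin (fun s => v1 s x) (Icc (2 * (k:ℝ) * T) ((2 * (k:ℝ) + 1) * T)) t = v2 t x
  pde2_fwd : ∀ k : ℕ, ∀ t ∈ Icc (2 * (k:ℝ) * T) ((2 * (k:ℝ) + 1) * T),
    ∀ x ∈ Icc (0:ℝ) 1,
    derivWithin (fun s => v2 s x) (Icc (2 * (k:ℝ) * T) ((2 * (k:ℝ) + 1) * T)) t
      = derivWithin (fun y => derivWithin (fun y' => v1 t y') (Icc (0:ℝ) 1) y)
          (Icc (0:ℝ) 1) x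
  pde1_bwd : ∀ k : ℕ, ∀ t ∈ Icc ((2 * (k:ℝ) + 1) * T) ((2 * (k:ℝ) + 2) * T),
    ∀ x ∈ Icc (0:ℝ) 1,
    derivWithin (fun s => v1 s x) (Icc ((2 * (k:ℝ) + 1) * T) ((2 * (k:ℝ) + 2) * T)) t
      = -v2 t x
  pde2_bwd : ∀ k : ℕ, ∀ t ∈ Icc ((2 * (k:ℝ) + 1) * T) ((2 * (k:ℝ) + 2) * T),
    ∀ x ∈ Icc (0:ℝ) 1,
    derivWithin (fun s => v2 s x) (Icc ((2 * (k:ℝ) + 1) * T) ((2 * (k:ℝ) + 2) * T)) t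
      = -derivWithin (fun y => derivWithin (fun y' => v1 t y') (Icc (0:ℝ) 1) y)
          (Icc (0:ℝ) 1) x
  ode1_fwd : ∀ k : ℕ, ∀ t ∈ Icc (2 * (k:ℝ) * T) ((2 * (k:ℝ) + 1) * T),
    derivWithin ξ1 (Icc (2 * (k:ℝ) * T) ((2 * (k:ℝ) + 1) * T)) t = ξ2 t - γ₂ * ξ1 t
  ode2_fwd : ∀ k : ℕ, ∀ t ∈ Icc (2 * (k:ℝ) * T) ((2 * (k:ℝ) + 1) * T),
    derivWithin ξ2 (Icc (2 * (k:ℝ) * T) ((2 * (k:ℝ) + 1) * T)) t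
      = -ω ^ 2 * ξ1 t + derivWithin (fun y => v1 t y) (Icc (0:ℝ) 1) 0
  ode3_fwd : ∀ k : ℕ, ∀ t ∈ Icc (2 * (k:ℝ) * T) ((2 * (k:ℝ) + 1) * T),
    derivWithin ξ3 (Icc (2 * (k:ℝ) * T) ((2 * (k:ℝ) + 1) * T)) t = ξ1 t
  ode1_bwd : ∀ k : ℕ, ∀ t ∈ Icc ((2 * (k:ℝ) + 1) * T) ((2 * (k:ℝ) + 2) * T),
    derivWithin ξ1 (Icc ((2 * (k:ℝ) + 1) * T) ((2 * (k:ℝ) + 2) * T)) t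
      = -ξ2 t - γ₂ * ξ1 t
  ode2_bwd : ∀ k : ℕ, ∀ t ∈ Icc ((2 * (k:ℝ) + 1) * T) ((2 * (k:ℝ) + 2) * T),
    derivWithin ξ2 (Icc ((2 * (k:ℝ) + 1) * T) ((2 * (k:ℝ) + 2) * T)) t
      = ω ^ 2 * ξ1 t - derivWithin (fun y => v1 t y) (Icc (0:ℝ) 1) 0
  ode3_bwd : ∀ k : ℕ, ∀ t ∈ Icc ((2 * (k:ℝ) + 1) * T) ((2 * (k:ℝ) + 2) * T),
    derivWithin ξ3 (Icc ((2 * (k:ℝ) + 1) * T) ((2 * (k:ℝ) + 2) * T)) t = ξ1 t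
  bc1 : ∀ t ∈ Ici (0:ℝ), v1 t 1 = 0
  bc0 : ∀ t ∈ Ici (0:ℝ), v1 t 0 = γ₁ * ξ1 t + γ₁ * γ₂ * ξ3 t

/-- Fundamental theorem of calculus for a function with a continuous one-sided derivative on a
closed interval, integrated up to an intermediate point. -/
theorem integral_eq_sub_of_hasDerivWithinAt_Icc {f f' : ℝ → ℝ} {a b t : ℝ}
    (ht : t ∈ Icc a b) (hf : ∀ s ∈ Icc a b, HasDerivWithinAt f (f' s) (Icc a b) s)
    (hf' : ContinuousOn f' (Icc a b)) :
    ∫ s in a..t, f' s = f t - f a := by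
  have hsub : Icc a t ⊆ Icc a b := Icc_subset_Icc_right ht.2
  refine integral_eq_sub_of_hasDerivAt_of_le ht.1
    (fun s hs => ((hf s (hsub hs)).continuousWithinAt).mono hsub) (fun s hs => ?_)
    ((hf'.mono hsub).intervalIntegrable_of_Icc ht.1)
  exact (hf s (hsub (Ioo_subset_Icc_self hs))).hasDerivAt
    (Icc_mem_nhds hs.1 (hs.2.trans_le ht.2))

/-- The partial derivative in the time variable of a function differentiable on a rectangle. -/
theorem hasDerivWithinAt_fst_of_differentiableOn {F : ℝ × ℝ → ℝ} {I J : Set ℝ}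
    (hF : DifferentiableOn ℝ F (I ×ˢ J)) {t x : ℝ} (ht : t ∈ I) (hx : x ∈ J) :
    HasDerivWithinAt (fun s => F (s, x)) (fderivWithin ℝ F (I ×ˢ J) (t, x) (1, 0)) I t :=
  (hF (t, x) ⟨ht, hx⟩).hasFDerivWithinAt.comp_hasDerivWithinAt (f := fun s => (s, x)) t
    ((hasDerivWithinAt_id t I).prodMk (hasDerivWithinAt_const t I x)) (fun _ hs => ⟨hs, hx⟩)

/-- The partial derivative in the space variable of a function differentiable on a rectangle. -/
theorem hasDerivWithinAt_snd_of_differentiableOn {F : ℝ × ℝ → ℝ} {I J : Set ℝ}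
    (hF : DifferentiableOn ℝ F (I ×ˢ J)) {t x : ℝ} (ht : t ∈ I) (hx : x ∈ J) :
    HasDerivWithinAt (fun y => F (t, y)) (fderivWithin ℝ F (I ×ˢ J) (t, x) (0, 1)) J x :=
  (hF (t, x) ⟨ht, hx⟩).hasFDerivWithinAt.comp_hasDerivWithinAt (f := fun y => (t, y)) x
    ((hasDerivWithinAt_const x J t).prodMk (hasDerivWithinAt_id x J)) (fun _ hs => ⟨ht, hs⟩)

/-- Energy balance for the first-order form `∂ₜu = σw`, `∂ₜw = σ∂ₓₓu` of the wave equation on a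
rectangle: the energy varies only through the boundary fluxes. -/
theorem wave_energy_balance {u w : ℝ → ℝ → ℝ} {a b σ : ℝ} (hab : a < b)
    (hu : ContDiffOn ℝ 2 (Function.uncurry u) (Icc a b ×ˢ Icc (0:ℝ) 1))
    (hw : ContDiffOn ℝ 1 (Function.uncurry w) (Icc a b ×ˢ Icc (0:ℝ) 1))
    (hut : ∀ t ∈ Icc a b, ∀ x ∈ Icc (0:ℝ) 1,
      derivWithin (fun s => u s x) (Icc a b) t = σ * w t x)
    (hwt : ∀ t ∈ Icc a b, ∀ x ∈ Icc (0:ℝ) 1,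
      derivWithin (fun s => w s x) (Icc a b) t
        = σ * derivWithin (fun y => derivWithin (fun y' => u t y') (Icc (0:ℝ) 1) y)
            (Icc (0:ℝ) 1) x)
    {t : ℝ} (ht : t ∈ Icc a b) :
    (∫ x in (0:ℝ)..1, ((derivWithin (fun y => u t y) (Icc (0:ℝ) 1) x) ^ 2 + (w t x) ^ 2))
      - (∫ x in (0:ℝ)..1, ((derivWithin (fun y => u a y) (Icc (0:ℝ) 1) x) ^ 2 + (w a x) ^ 2))
      = ∫ s in a..t, 2 * σ * (w s 1 * derivWithin (fun y => u s y) (Icc (0:ℝ) 1) 1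
          - w s 0 * derivWithin (fun y => u s y) (Icc (0:ℝ) 1) 0) := by
  set I := Icc a b with hI
  set J := Icc (0:ℝ) 1 with hJ
  have hIu : UniqueDiffOn ℝ I := uniqueDiffOn_Icc hab
  have hJu : UniqueDiffOn ℝ J := uniqueDiffOn_Icc one_pos
  have hRu : UniqueDiffOn ℝ (I ×ˢ J) := hIu.prod hJu
  have haI : a ∈ I := left_mem_Icc.2 hab.le
  have hdense : closure (interior (I ×ˢ J)) = I ×ˢ J := by
    rw [interior_prod_eq, closure_prod_eq, closure_interior_Icc hab.ne,
      closure_interior_Icc zero_ne_one]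
  set Du := fderivWithin ℝ (Function.uncurry u) (I ×ˢ J) with hDu
  have hDuC : ContDiffOn ℝ 1 Du (I ×ˢ J) := hu.fderivWithin hRu (by norm_num)
  set p : ℝ × ℝ → ℝ := fun z => Du z (0, 1) with hp
  have hpC : ContDiffOn ℝ 1 p (I ×ˢ J) := hDuC.clm_apply contDiffOn_const
  have hpd := hpC.differentiableOn one_ne_zero
  have hud := hu.differentiableOn two_ne_zero
  have hwd := hw.differentiableOn one_ne_zero
  -- identify the iterated one-variable derivatives with partial derivatives on the rectangle
  have hux : ∀ s ∈ I, ∀ x ∈ J, derivWithin (fun y => u s y) J x = p (s, x) := fun s hs x hx =>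
    (hasDerivWithinAt_snd_of_differentiableOn hud hs hx).derivWithin (hJu x hx)
  have huxx : ∀ s ∈ I, ∀ x ∈ J, derivWithin (fun y => derivWithin (fun y' => u s y') J y) J x
      = fderivWithin ℝ p (I ×ˢ J) (s, x) (0, 1) := fun s hs x hx => by
    rw [derivWithin_congr (fun y hy => hux s hs y hy) (hux s hs x hx)]
    exact (hasDerivWithinAt_snd_of_differentiableOn hpd hs hx).derivWithin (hJu x hx)
  have hwt' : ∀ s ∈ I, ∀ x ∈ J, fderivWithin ℝ (Function.uncurry w) (I ×ˢ J) (s, x) (1, 0)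
      = σ * fderivWithin ℝ p (I ×ˢ J) (s, x) (0, 1) := fun s hs x hx => by
    rw [← huxx s hs x hx, ← hwt s hs x hx]
    exact ((hasDerivWithinAt_fst_of_differentiableOn hwd hs hx).derivWithin (hIu s hs)).symm
  have hut' : ∀ z ∈ I ×ˢ J, Du z (1, 0) = σ * Function.uncurry w z := fun z hz => by
    rw [← show _ = σ * Function.uncurry w z from hut z.1 hz.1 z.2 hz.2]
    exact ((hasDerivWithinAt_fst_of_differentiableOn hud hz.1 hz.2).derivWithin
      (hIu z.1 hz.1)).symm
  have happ : ∀ z ∈ I ×ˢ J, ∀ v v' : ℝ × ℝ,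
      fderivWithin ℝ (fun z => Du z v) (I ×ˢ J) z v' = fderivWithin ℝ Du (I ×ˢ J) z v' v :=
    fun z hz v v' => by
      rw [fderivWithin_clm_apply (hRu z hz) (hDuC.differentiableOn one_ne_zero z hz)
        (differentiableWithinAt_const v)]
      simp
  have hpt : ∀ z ∈ I ×ˢ J, fderivWithin ℝ p (I ×ˢ J) z (1, 0)
      = σ * fderivWithin ℝ (Function.uncurry w) (I ×ˢ J) z (0, 1) := fun z hz => by
    have hsymm : IsSymmSndFDerivWithinAt ℝ (Function.uncurry u) (I ×ˢ J) z :=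
      (hu z hz).isSymmSndFDerivWithinAt (by simp) hRu (hdense.symm ▸ hz) hz
    rw [happ z hz, hsymm, ← happ z hz, fderivWithin_congr hut' (hut' z hz),
      fderivWithin_const_mul (hRu z hz) (hwd z hz)]
    simp
  -- the time derivative of the energy density
  set g : ℝ → ℝ → ℝ := fun s x =>
    2 * σ * (fderivWithin ℝ (Function.uncurry w) (I ×ˢ J) (s, x) (0, 1) * p (s, x)
      + w s x * fderivWithin ℝ p (I ×ˢ J) (s, x) (0, 1)) with hg
  have hgC : ContinuousOn (Function.uncurry g) (I ×ˢ J) := by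
    have h1 : ContinuousOn (fun z => fderivWithin ℝ (Function.uncurry w) (I ×ˢ J) z (0, 1))
        (I ×ˢ J) := (hw.continuousOn_fderivWithin hRu (by norm_num)).clm_apply continuousOn_const
    have h2 : ContinuousOn (fun z => fderivWithin ℝ p (I ×ˢ J) z (0, 1)) (I ×ˢ J) :=
      (hpC.continuousOn_fderivWithin hRu (by norm_num)).clm_apply continuousOn_const
    exact continuousOn_const.mul ((h1.mul hpC.continuousOn).add (hw.continuousOn.mul h2))
  have hslice_t : ∀ x ∈ J, MapsTo (fun s : ℝ => (s, x)) I (I ×ˢ J) := fun x hx s hs => ⟨hs, hx⟩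
  have hslice_x : ∀ s ∈ I, MapsTo (fun x : ℝ => (s, x)) J (I ×ˢ J) := fun s hs x hx => ⟨hs, hx⟩
  have htime : ∀ x ∈ J, ∫ s in a..t, g s x
      = (p (t, x) ^ 2 + w t x ^ 2) - (p (a, x) ^ 2 + w a x ^ 2) := fun x hx => by
    refine integral_eq_sub_of_hasDerivWithinAt_Icc (f := fun s => p (s, x) ^ 2 + w s x ^ 2) ht
      (fun s hs => ?_) (hgC.comp (by fun_prop) (hslice_t x hx))
    have h1 := hasDerivWithinAt_fst_of_differentiableOn hpd hs hx
    have h2 := hasDerivWithinAt_fst_of_differentiableOn hwd hs hx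
    rw [hpt (s, x) ⟨hs, hx⟩] at h1
    rw [hwt' s hs x hx] at h2
    refine ((h1.pow 2).add (h2.pow 2)).congr_deriv ?_
    simp only [hg, Function.uncurry]
    push_cast
    ring
  have hspace : ∀ s ∈ I, ∫ x in (0:ℝ)..1, g s x
      = 2 * σ * (w s 1 * p (s, 1) - w s 0 * p (s, 0)) := fun s hs => by
    refine (integral_eq_sub_of_hasDerivWithinAt_Icc (f := fun x => 2 * σ * (w s x * p (s, x)))
      (right_mem_Icc.2 zero_le_one)
      (fun x hx => ?_) (hgC.comp (by fun_prop) (hslice_x s hs))).trans ?_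
    · have h1 := hasDerivWithinAt_snd_of_differentiableOn hpd hs hx
      have h2 := hasDerivWithinAt_snd_of_differentiableOn hwd hs hx
      exact (h2.mul h1).const_mul (2 * σ)
    · ring
  have hdensity : ∀ s ∈ I, ContinuousOn (fun x => p (s, x) ^ 2 + w s x ^ 2) J := fun s hs =>
    ((hpC.continuousOn.comp (by fun_prop) (hslice_x s hs)).pow 2).add
      ((hw.continuousOn.comp (by fun_prop) (hslice_x s hs)).pow 2)
  have henergy : ∀ s ∈ I, (∫ x in (0:ℝ)..1, ((derivWithin (fun y => u s y) J x) ^ 2 + w s x ^ 2))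
      = ∫ x in (0:ℝ)..1, (p (s, x) ^ 2 + w s x ^ 2) := fun s hs => by
    refine integral_congr fun x hx => ?_
    rw [uIcc_of_le zero_le_one] at hx
    simp only [hux s hs x hx]
  have hsub : uIcc a t ⊆ I := by
    rw [uIcc_of_le ht.1]
    exact Icc_subset_Icc_right ht.2
  rw [henergy t ht, henergy a haI,
    ← integral_sub ((hdensity t ht).intervalIntegrable_of_Icc zero_le_one)
      ((hdensity a haI).intervalIntegrable_of_Icc zero_le_one)]
  calc _ = ∫ x in (0:ℝ)..1, ∫ s in a..t, g s x := by
        refine integral_congr fun x hx => ?_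
        rw [uIcc_of_le zero_le_one] at hx
        exact (htime x hx).symm
    _ = ∫ s in a..t, ∫ x in (0:ℝ)..1, g s x := by
        refine (intervalIntegral_intervalIntegral_swap ?_).symm
        refine (hgC.integrableOn_compact (isCompact_Icc.prod isCompact_Icc)).mono_set
          (prod_mono (uIoc_subset_uIcc.trans hsub) ?_)
        exact uIoc_subset_uIcc.trans (uIcc_of_le zero_le_one).subset
    _ = _ := by
        refine integral_congr fun s hs => ?_
        simp only [hspace s (hsub hs), hux s (hsub hs) 0 (left_mem_Icc.2 zero_le_one),
          hux s (hsub hs) 1 (right_mem_Icc.2 zero_le_one)]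

/-- The energy at time `t` of a string with displacement `u` and velocity `w` coupled to a boundary
oscillator with state `ξ₁, ξ₂`. -/
noncomputable def couplingEnergy (ω γ₁ : ℝ) (u w : ℝ → ℝ → ℝ) (ξ1 ξ2 : ℝ → ℝ) (t : ℝ) : ℝ :=
  (∫ x in (0:ℝ)..1, ((derivWithin (fun y => u t y) (Icc (0:ℝ) 1) x) ^ 2 + (w t x) ^ 2))
    + γ₁ * (ξ2 t) ^ 2 + γ₁ * ω ^ 2 * (ξ1 t) ^ 2

/-- Energy dissipation on a single time interval for the wave equation coupled to the boundary
oscillator, run forwards (`σ = 1`) or backwards (`σ = -1`) in time. -/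
theorem couplingEnergy_add_integral_eq {ω γ₁ γ₂ a b σ : ℝ} {u w : ℝ → ℝ → ℝ} {ξ1 ξ2 ξ3 : ℝ → ℝ}
    (hab : a < b) (hσ : σ ≠ 0)
    (hu : ContDiffOn ℝ 2 (Function.uncurry u) (Icc a b ×ˢ Icc (0:ℝ) 1))
    (hw : ContDiffOn ℝ 2 (Function.uncurry w) (Icc a b ×ˢ Icc (0:ℝ) 1))
    (hξ1 : ContDiffOn ℝ 1 ξ1 (Icc a b)) (hξ2 : ContDiffOn ℝ 1 ξ2 (Icc a b))
    (hξ3 : ContDiffOn ℝ 1 ξ3 (Icc a b))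
    (hut : ∀ t ∈ Icc a b, ∀ x ∈ Icc (0:ℝ) 1,
      derivWithin (fun s => u s x) (Icc a b) t = σ * w t x)
    (hwt : ∀ t ∈ Icc a b, ∀ x ∈ Icc (0:ℝ) 1,
      derivWithin (fun s => w s x) (Icc a b) t
        = σ * derivWithin (fun y => derivWithin (fun y' => u t y') (Icc (0:ℝ) 1) y)
            (Icc (0:ℝ) 1) x)
    (h1 : ∀ t ∈ Icc a b, derivWithin ξ1 (Icc a b) t = σ * ξ2 t - γ₂ * ξ1 t)
    (h2 : ∀ t ∈ Icc a b, derivWithin ξ2 (Icc a b) t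
      = σ * (-ω ^ 2 * ξ1 t + derivWithin (fun y => u t y) (Icc (0:ℝ) 1) 0))
    (h3 : ∀ t ∈ Icc a b, derivWithin ξ3 (Icc a b) t = ξ1 t)
    (hbc1 : ∀ t ∈ Icc a b, u t 1 = 0)
    (hbc0 : ∀ t ∈ Icc a b, u t 0 = γ₁ * ξ1 t + γ₁ * γ₂ * ξ3 t)
    {t : ℝ} (ht : t ∈ Icc a b) :
    couplingEnergy ω γ₁ u w ξ1 ξ2 t + 2 * γ₁ * γ₂ * ω ^ 2 * ∫ s in a..t, (ξ1 s) ^ 2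
      = couplingEnergy ω γ₁ u w ξ1 ξ2 a := by
  have hIu : UniqueDiffOn ℝ (Icc a b) := uniqueDiffOn_Icc hab
  have hd1 : ∀ s ∈ Icc a b, HasDerivWithinAt ξ1 (σ * ξ2 s - γ₂ * ξ1 s) (Icc a b) s :=
    fun s hs => h1 s hs ▸ (hξ1.differentiableOn one_ne_zero s hs).hasDerivWithinAt
  have hd2 : ∀ s ∈ Icc a b, HasDerivWithinAt ξ2 (derivWithin ξ2 (Icc a b) s) (Icc a b) s :=
    fun s hs => (hξ2.differentiableOn one_ne_zero s hs).hasDerivWithinAt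
  have hd3 : ∀ s ∈ Icc a b, HasDerivWithinAt ξ3 (ξ1 s) (Icc a b) s :=
    fun s hs => h3 s hs ▸ (hξ3.differentiableOn one_ne_zero s hs).hasDerivWithinAt
  have hw1 : ∀ s ∈ Icc a b, w s 1 = 0 := fun s hs => by
    have h := hut s hs 1 (right_mem_Icc.2 zero_le_one)
    rw [derivWithin_congr hbc1 (hbc1 s hs)] at h
    simpa [hσ] using h.symm
  have hw0 : ∀ s ∈ Icc a b, w s 0 = γ₁ * ξ2 s := fun s hs => by
    have h := hut s hs 0 (left_mem_Icc.2 zero_le_one)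
    rw [derivWithin_congr hbc0 (hbc0 s hs)] at h
    have h' := (((hd1 s hs).const_mul γ₁).add ((hd3 s hs).const_mul (γ₁ * γ₂))).derivWithin
      (hIu s hs)
    have h'' := h.symm.trans h'
    exact mul_left_cancel₀ hσ (by linarith)
  have hc1 := hξ1.continuousOn
  have hc2 := hξ2.continuousOn
  have hc2' := hξ2.continuousOn_derivWithin hIu le_rfl
  have hosc : ∫ s in a..t, (2 * γ₁ * ξ2 s * derivWithin ξ2 (Icc a b) s
        + 2 * γ₁ * ω ^ 2 * ξ1 s * (σ * ξ2 s - γ₂ * ξ1 s))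
      = (γ₁ * ξ2 t ^ 2 + γ₁ * ω ^ 2 * ξ1 t ^ 2) - (γ₁ * ξ2 a ^ 2 + γ₁ * ω ^ 2 * ξ1 a ^ 2) := by
    refine integral_eq_sub_of_hasDerivWithinAt_Icc
      (f := fun s => γ₁ * ξ2 s ^ 2 + γ₁ * ω ^ 2 * ξ1 s ^ 2) ht (fun s hs => ?_) (by fun_prop)
    refine ((((hd2 s hs).pow 2).const_mul γ₁).add
      (((hd1 s hs).pow 2).const_mul (γ₁ * ω ^ 2))).congr_deriv ?_
    push_cast
    ring
  have hflux := wave_energy_balance hab hu (hw.of_le one_le_two) hut hwt ht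
  have hsub : uIcc a t ⊆ Icc a b := by
    rw [uIcc_of_le ht.1]
    exact Icc_subset_Icc_right ht.2
  have hcancel : ∫ s in a..t, (2 * γ₁ * ξ2 s * derivWithin ξ2 (Icc a b) s
        + 2 * γ₁ * ω ^ 2 * ξ1 s * (σ * ξ2 s - γ₂ * ξ1 s))
      = -(2 * γ₁ * γ₂ * ω ^ 2) * (∫ s in a..t, ξ1 s ^ 2)
        - ∫ s in a..t, 2 * σ * (w s 1 * derivWithin (fun y => u s y) (Icc (0:ℝ) 1) 1
          - w s 0 * derivWithin (fun y => u s y) (Icc (0:ℝ) 1) 0) := by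
    rw [← intervalIntegral.integral_const_mul, ← intervalIntegral.integral_sub]
    · refine integral_congr fun s hs => ?_
      simp only [h2 s (hsub hs), hw1 s (hsub hs), hw0 s (hsub hs)]
      ring
    · exact ((continuousOn_const.mul (hc1.pow 2)).mono hsub).intervalIntegrable
    · refine ContinuousOn.intervalIntegrable (ContinuousOn.congr (f := fun s =>
        -(2 * γ₁ * ξ2 s * (derivWithin ξ2 (Icc a b) s + σ * ω ^ 2 * ξ1 s))) ?_ fun s hs => ?_)
      · exact ContinuousOn.mono (by fun_prop) hsub
      · simp only [h2 s (hsub hs), hw1 s (hsub hs), hw0 s (hsub hs)]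
        ring
  unfold couplingEnergy
  linarith

/-- Energy dissipation on the `n`-th strip, whichever the direction of time on it. -/
theorem BackAndForthSol.couplingEnergy_add_integral_eq_strip {T ω γ₁ γ₂ : ℝ} (S : BackAndForthSol T ω γ₁ γ₂)
    (hT : 0 < T) (n : ℕ) {t : ℝ} (ht : t ∈ Icc (n * T) ((n + 1) * T)) :
    couplingEnergy ω γ₁ S.v1 S.v2 S.ξ1 S.ξ2 t
      + 2 * γ₁ * γ₂ * ω ^ 2 * ∫ s in (n * T)..t, (S.ξ1 s) ^ 2
      = couplingEnergy ω γ₁ S.v1 S.v2 S.ξ1 S.ξ2 (n * T) := by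
  have hnonneg : ∀ s ∈ Icc (n * T) ((n + 1) * T), s ∈ Ici (0:ℝ) :=
    fun s hs => (by positivity : (0:ℝ) ≤ n * T).trans hs.1
  have hlt : n * T < (n + 1) * T := by linarith
  obtain ⟨k, rfl | rfl⟩ := n.even_or_odd'
  · push_cast at *
    exact _root_.couplingEnergy_add_integral_eq hlt (σ := 1) (by norm_num)
      (S.smooth_v1_fwd k) (S.smooth_v2_fwd k) (S.smooth_ξ1_fwd k) (S.smooth_ξ2_fwd k)
      (S.smooth_ξ3_fwd k) (by simpa using S.pde1_fwd k) (by simpa using S.pde2_fwd k)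
      (by simpa using S.ode1_fwd k) (by simpa using S.ode2_fwd k) (S.ode3_fwd k)
      (fun s hs => S.bc1 s (hnonneg s hs)) (fun s hs => S.bc0 s (hnonneg s hs)) ht
  · push_cast at *
    have hend : (2 * (k:ℝ) + 1 + 1) = 2 * k + 2 := by ring
    rw [hend] at ht hlt hnonneg
    exact _root_.couplingEnergy_add_integral_eq hlt (σ := -1) (by norm_num)
      (S.smooth_v1_bwd k) (S.smooth_v2_bwd k) (S.smooth_ξ1_bwd k) (S.smooth_ξ2_bwd k)
      (S.smooth_ξ3_bwd k) (by simpa using S.pde1_bwd k) (by simpa using S.pde2_bwd k)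
      (by simpa using S.ode1_bwd k)
      (fun s hs => by rw [S.ode2_bwd k s hs]; ring) (S.ode3_bwd k)
      (fun s hs => S.bc1 s (hnonneg s hs)) (fun s hs => S.bc0 s (hnonneg s hs)) ht

/-- global-in-time energy identity (26) for the back-and-forth
dynamics: for every `t ≥ 0`,
`∫₀¹(|∂ₓv¹(t)|² + |v²(t)|²)dx + γ₁ξ₂(t)² + γ₁ω²ξ₁(t)² + 2γ₁γ₂ω²∫₀ᵗξ₁²`
equals the initial energy `∫₀¹(|∂ₓv¹(0)|² + |v²(0)|²)dx + γ₁ξ₂(0)² + γ₁ω²ξ₁(0)²`. -/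
theorem back_and_forth_energy_identity
    (T ω γ₁ γ₂ : ℝ) (hT : 0 < T) (hγ₁ : 0 < γ₁) (hγ₂ : 0 < γ₂)
    (S : BackAndForthSol T ω γ₁ γ₂) :
    ∀ t ∈ Ici (0:ℝ),
      (∫ x in (0:ℝ)..1,
          ((derivWithin (fun y => S.v1 t y) (Icc (0:ℝ) 1) x) ^ 2 + (S.v2 t x) ^ 2))
        + γ₁ * (S.ξ2 t) ^ 2 + γ₁ * ω ^ 2 * (S.ξ1 t) ^ 2
        + 2 * γ₁ * γ₂ * ω ^ 2 * ∫ s in (0:ℝ)..t, (S.ξ1 s) ^ 2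
      = (∫ x in (0:ℝ)..1,
          ((derivWithin (fun y => S.v1 0 y) (Icc (0:ℝ) 1) x) ^ 2 + (S.v2 0 x) ^ 2))
        + γ₁ * (S.ξ2 0) ^ 2 + γ₁ * ω ^ 2 * (S.ξ1 0) ^ 2 := by
  have hint : ∀ {a b : ℝ}, 0 ≤ a → 0 ≤ b →
      IntervalIntegrable (fun s => S.ξ1 s ^ 2) volume a b := fun ha hb =>
    ((S.cont_ξ1.pow 2).mono fun s hs => (le_inf ha hb).trans hs.1).intervalIntegrable
  have hglue : ∀ n : ℕ, ∀ t ∈ Icc (n * T) ((n + 1) * T),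
      couplingEnergy ω γ₁ S.v1 S.v2 S.ξ1 S.ξ2 t
        + 2 * γ₁ * γ₂ * ω ^ 2 * ∫ s in (0:ℝ)..t, (S.ξ1 s) ^ 2
        = couplingEnergy ω γ₁ S.v1 S.v2 S.ξ1 S.ξ2 0 := by
    intro n
    induction n with
    | zero =>
      intro t ht
      simpa using S.couplingEnergy_add_integral_eq_strip hT 0 ht
    | succ n ih =>
      intro t ht
      have h0 : (0:ℝ) ≤ (n + 1 : ℕ) * T := by positivity
      have hstart := ih ((n + 1 : ℕ) * T)
        ⟨by push_cast; linarith, by push_cast; exact le_rfl⟩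
      have hstep := S.couplingEnergy_add_integral_eq_strip hT (n + 1) ht
      rw [← integral_add_adjacent_intervals (hint le_rfl h0) (hint h0 (h0.trans ht.1))]
      linarith
  intro t ht
  have hquot : 0 ≤ t / T := div_nonneg ht hT.le
  exact hglue ⌊t / T⌋₊ t
    ⟨(le_div_iff₀ hT).1 (Nat.floor_le hquot), ((div_lt_iff₀ hT).1 (Nat.lt_floor_add_one _)).le⟩
end

section
/- Let (v¹, v², ξ₁, ξ₂, ξ₃) be a classical solution of the forward coupled observer system on [0,T], with v¹ and v² additionally of class C³. Then for every t ∈ [0,T]: (d/dt)[ (1/2)·( ∫₀¹ (|∂ₜv²(t,x)|² + |∂ₓv²(t,x)|²) dx + γ₁·|∂ₓv¹(t,0)|² ) ] = γ₁ω² · ∂ₓv²(t,0) · ξ₁(t). (This is the differentiated second-order energy identity used in Step 2 of the proof of the energy estimates.) -/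
open Set Filter MeasureTheory intervalIntegral

/-- A classical solution of the forward coupled observer system on `[0,T]`:
`∂ₜv¹ = v²`, `∂ₜv² = ∂ₓₓv¹` on `[0,T] × [0,1]`, boundary conditions `v¹(t,1) = 0`,
`v¹(t,0) = γ₁ξ₁(t) + γ₁γ₂ξ₃(t)`, and the observer ODEs `ξ₁' = ξ₂ − γ₂ξ₁`,
`ξ₂' = −ω²ξ₁ + ∂ₓv¹(·,0)`, `ξ₃' = ξ₁` on `[0,T]`. -/
structure FwdObserverSol (T ω γ₁ γ₂ : ℝ) where
  v1 : ℝ → ℝ → ℝ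
  v2 : ℝ → ℝ → ℝ
  ξ1 : ℝ → ℝ
  ξ2 : ℝ → ℝ
  ξ3 : ℝ → ℝ
  smooth_v1 : ContDiff ℝ 2 (Function.uncurry v1)
  smooth_v2 : ContDiff ℝ 2 (Function.uncurry v2)
  smooth_ξ1 : ContDiff ℝ 1 ξ1
  smooth_ξ2 : ContDiff ℝ 1 ξ2
  smooth_ξ3 : ContDiff ℝ 1 ξ3
  pde1 : ∀ t ∈ Icc (0:ℝ) T, ∀ x ∈ Icc (0:ℝ) 1, deriv (fun s => v1 s x) t = v2 t x
  pde2 : ∀ t ∈ Icc (0:ℝ) T, ∀ x ∈ Icc (0:ℝ) 1,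
    deriv (fun s => v2 s x) t = deriv (deriv (fun y => v1 t y)) x
  bc1 : ∀ t ∈ Icc (0:ℝ) T, v1 t 1 = 0
  bc0 : ∀ t ∈ Icc (0:ℝ) T, v1 t 0 = γ₁ * ξ1 t + γ₁ * γ₂ * ξ3 t
  ode1 : ∀ t ∈ Icc (0:ℝ) T, deriv ξ1 t = ξ2 t - γ₂ * ξ1 t
  ode2 : ∀ t ∈ Icc (0:ℝ) T, deriv ξ2 t = -ω ^ 2 * ξ1 t + deriv (fun y => v1 t y) 0
  ode3 : ∀ t ∈ Icc (0:ℝ) T, deriv ξ3 t = ξ1 t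

/-- The partial derivative of `f` in its first variable. -/
noncomputable def derivFst (f : ℝ → ℝ → ℝ) (t x : ℝ) : ℝ := deriv (fun s => f s x) t

/-- The partial derivative of `f` in its second variable. -/
noncomputable def derivSnd (f : ℝ → ℝ → ℝ) (t x : ℝ) : ℝ := deriv (fun y => f t y) x

section PartialDerivatives

variable {f : ℝ → ℝ → ℝ}

lemma hasDerivAt_fderiv_fst (hf : Differentiable ℝ (Function.uncurry f)) (t x : ℝ) :
    HasDerivAt (fun s => f s x) (fderiv ℝ (Function.uncurry f) (t, x) (1, 0)) t :=
  (hf (t, x)).hasFDerivAt.comp_hasDerivAt (f := fun s => (s, x)) t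
    ((hasDerivAt_id t).prodMk (hasDerivAt_const t x))

lemma hasDerivAt_fderiv_snd (hf : Differentiable ℝ (Function.uncurry f)) (t x : ℝ) :
    HasDerivAt (fun y => f t y) (fderiv ℝ (Function.uncurry f) (t, x) (0, 1)) x :=
  (hf (t, x)).hasFDerivAt.comp_hasDerivAt (f := fun y => (t, y)) x
    ((hasDerivAt_const x t).prodMk (hasDerivAt_id x))

lemma hasDerivAt_derivFst (hf : Differentiable ℝ (Function.uncurry f)) (t x : ℝ) :
    HasDerivAt (fun s => f s x) (derivFst f t x) t :=
  (hasDerivAt_fderiv_fst hf t x).differentiableAt.hasDerivAt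

lemma hasDerivAt_derivSnd (hf : Differentiable ℝ (Function.uncurry f)) (t x : ℝ) :
    HasDerivAt (fun y => f t y) (derivSnd f t x) x :=
  (hasDerivAt_fderiv_snd hf t x).differentiableAt.hasDerivAt

lemma uncurry_derivFst (hf : Differentiable ℝ (Function.uncurry f)) :
    Function.uncurry (derivFst f) = fun p => fderiv ℝ (Function.uncurry f) p (1, 0) :=
  funext fun p => (hasDerivAt_fderiv_fst hf p.1 p.2).deriv

lemma uncurry_derivSnd (hf : Differentiable ℝ (Function.uncurry f)) :
    Function.uncurry (derivSnd f) = fun p => fderiv ℝ (Function.uncurry f) p (0, 1) :=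
  funext fun p => (hasDerivAt_fderiv_snd hf p.1 p.2).deriv

lemma contDiff_uncurry_derivFst {n : ℕ} (hf : ContDiff ℝ (n + 1) (Function.uncurry f)) :
    ContDiff ℝ n (Function.uncurry (derivFst f)) := by
  rw [uncurry_derivFst (hf.differentiable (by simp))]
  exact (hf.fderiv_right le_rfl).clm_apply contDiff_const

lemma contDiff_uncurry_derivSnd {n : ℕ} (hf : ContDiff ℝ (n + 1) (Function.uncurry f)) :
    ContDiff ℝ n (Function.uncurry (derivSnd f)) := by
  rw [uncurry_derivSnd (hf.differentiable (by simp))]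
  exact (hf.fderiv_right le_rfl).clm_apply contDiff_const

/-- Mixed partial derivatives of a `C²` function commute. -/
lemma derivFst_derivSnd_comm (hf : ContDiff ℝ 2 (Function.uncurry f)) (t x : ℝ) :
    derivFst (derivSnd f) t x = derivSnd (derivFst f) t x := by
  have hd : Differentiable ℝ (Function.uncurry f) := hf.differentiable (by simp)
  have hdd : DifferentiableAt ℝ (fderiv ℝ (Function.uncurry f)) (t, x) :=
    (hf.fderiv_right (m := 1) (by norm_num)).differentiable (by simp) _
  have hS : Differentiable ℝ (Function.uncurry (derivSnd f)) :=
    (contDiff_uncurry_derivSnd (n := 1) (by simpa [one_add_one_eq_two] using hf)).differentiable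
      (by simp)
  have hF : Differentiable ℝ (Function.uncurry (derivFst f)) :=
    (contDiff_uncurry_derivFst (n := 1) (by simpa [one_add_one_eq_two] using hf)).differentiable
      (by simp)
  have key : ∀ v w : ℝ × ℝ, fderiv ℝ (fun p => fderiv ℝ (Function.uncurry f) p v) (t, x) w =
      fderiv ℝ (fderiv ℝ (Function.uncurry f)) (t, x) w v := fun v w => by
    rw [fderiv_clm_apply hdd (differentiableAt_const v)]
    simp
  rw [derivFst, derivSnd, (hasDerivAt_fderiv_fst hS t x).deriv,
    (hasDerivAt_fderiv_snd hF t x).deriv, uncurry_derivSnd hd, uncurry_derivFst hd, key, key]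
  exact hf.contDiffAt.isSymmSndFDerivAt (by simp) _ _

/-- Differentiation under the integral sign for a `C¹` integrand over a compact interval. -/
lemma hasDerivAt_integral_derivFst (hf : ContDiff ℝ 1 (Function.uncurry f)) (a b t : ℝ) :
    HasDerivAt (fun s => ∫ x in a..b, f s x) (∫ x in a..b, derivFst f t x) t := by
  have hc : Continuous (Function.uncurry (derivFst f)) :=
    (contDiff_uncurry_derivFst (n := 0) (by simpa using hf)).continuous
  obtain ⟨C, hC⟩ := ((isCompact_Icc (a := t - 1) (b := t + 1)).prod
    (isCompact_uIcc (a := a) (b := b))).exists_bound_of_continuousOn hc.continuousOn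
  have hfs : ∀ s, Continuous (f s) := fun s =>
    hf.continuous.comp (by fun_prop : Continuous fun x : ℝ => (s, x))
  have hfs' : Continuous (derivFst f t) := hc.comp (by fun_prop : Continuous fun x : ℝ => (t, x))
  refine (intervalIntegral.hasDerivAt_integral_of_dominated_loc_of_deriv_le
    (s := Icc (t - 1) (t + 1)) (bound := fun _ => C) (F' := derivFst f)
    (Icc_mem_nhds (by linarith) (by linarith))
    (Eventually.of_forall fun s => (hfs s).aestronglyMeasurable)
    ((hfs t).intervalIntegrable a b) hfs'.aestronglyMeasurable
    (Eventually.of_forall fun x hx s hs => ?_) intervalIntegrable_const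
    (Eventually.of_forall fun x _ s _ => ?_)).2
  · exact hC (s, x) ⟨hs, uIoc_subset_uIcc hx⟩
  · exact hasDerivAt_derivFst (hf.differentiable (by simp)) s x

end PartialDerivatives

/-- Functions that agree on a nondegenerate closed interval have the same derivatives there,
endpoints included. -/
lemma HasDerivAt.eq_of_eqOn_Icc {f g : ℝ → ℝ} {f' g' a b t : ℝ} (hab : a < b)
    (hf : HasDerivAt f f' t) (hg : HasDerivAt g g' t) (ht : t ∈ Icc a b)
    (h : EqOn f g (Icc a b)) : f' = g' :=
  (uniqueDiffOn_Icc hab t ht).eq_deriv _ hf.hasDerivWithinAt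
    (hg.hasDerivWithinAt.congr_of_mem h ht)

namespace FwdObserverSol

variable {T ω γ₁ γ₂ : ℝ} (S : FwdObserverSol T ω γ₁ γ₂) {t : ℝ}

/-- The velocity `v²` solves the wave equation. -/
lemma derivFst_derivFst_v2 (hT : 0 < T) (hv1 : ContDiff ℝ 3 (Function.uncurry S.v1))
    (ht : t ∈ Icc 0 T) {x : ℝ} (hx : x ∈ Icc (0 : ℝ) 1) :
    derivFst (derivFst S.v2) t x = derivSnd (derivSnd S.v2) t x := by
  have hv1S : ContDiff ℝ 2 (Function.uncurry (derivSnd S.v1)) :=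
    contDiff_uncurry_derivSnd (n := 2) (by exact_mod_cast hv1)
  have hv1F : ContDiff ℝ 2 (Function.uncurry (derivFst S.v1)) :=
    contDiff_uncurry_derivFst (n := 2) (by exact_mod_cast hv1)
  have hv1SS : ContDiff ℝ 1 (Function.uncurry (derivSnd (derivSnd S.v1))) :=
    contDiff_uncurry_derivSnd (n := 1) (by exact_mod_cast hv1S)
  have hv1FS : ContDiff ℝ 1 (Function.uncurry (derivSnd (derivFst S.v1))) :=
    contDiff_uncurry_derivSnd (n := 1) (by exact_mod_cast hv1F)
  have hv2F : ContDiff ℝ 1 (Function.uncurry (derivFst S.v2)) :=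
    contDiff_uncurry_derivFst (n := 1) (by exact_mod_cast S.smooth_v2)
  have hv2S : ContDiff ℝ 1 (Function.uncurry (derivSnd S.v2)) :=
    contDiff_uncurry_derivSnd (n := 1) (by exact_mod_cast S.smooth_v2)
  have hmix : derivFst (derivSnd S.v1) = derivSnd (derivFst S.v1) :=
    funext fun s => funext fun y => derivFst_derivSnd_comm S.smooth_v1 s y
  calc derivFst (derivFst S.v2) t x
      = derivFst (derivSnd (derivSnd S.v1)) t x :=
        (hasDerivAt_derivFst (hv2F.differentiable (by simp)) t x).eq_of_eqOn_Icc hT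
          (hasDerivAt_derivFst (hv1SS.differentiable (by simp)) t x) ht
          fun s hs => S.pde2 s hs x hx
    _ = derivSnd (derivSnd (derivFst S.v1)) t x := by
        rw [derivFst_derivSnd_comm hv1S, hmix]
    _ = derivSnd (derivSnd S.v2) t x :=
        (hasDerivAt_derivSnd (hv1FS.differentiable (by simp)) t x).eq_of_eqOn_Icc one_pos
          (hasDerivAt_derivSnd (hv2S.differentiable (by simp)) t x) hx
          fun y hy => (hasDerivAt_derivSnd (hv1F.differentiable (by simp)) t y).eq_of_eqOn_Icc
            one_pos (hasDerivAt_derivSnd (S.smooth_v2.differentiable (by simp)) t y) hy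
            fun z hz => S.pde1 t ht z hz

lemma derivFst_v2_one (hT : 0 < T) (ht : t ∈ Icc 0 T) : derivFst S.v2 t 1 = 0 :=
  (hasDerivAt_derivFst (S.smooth_v2.differentiable (by simp)) t 1).eq_of_eqOn_Icc hT
    (hasDerivAt_const t 0) ht fun s hs => (S.pde1 s hs 1 (by simp)).symm.trans <|
      (hasDerivAt_derivFst (S.smooth_v1.differentiable (by simp)) s 1).eq_of_eqOn_Icc hT
        (hasDerivAt_const s 0) hs fun r hr => S.bc1 r hr

lemma v2_zero (hT : 0 < T) (ht : t ∈ Icc 0 T) : S.v2 t 0 = γ₁ * S.ξ2 t := by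
  have hξ1 := (S.smooth_ξ1.differentiable (by simp) t).hasDerivAt
  have hξ3 := (S.smooth_ξ3.differentiable (by simp) t).hasDerivAt
  have h := (hasDerivAt_derivFst (S.smooth_v1.differentiable (by simp)) t 0).eq_of_eqOn_Icc hT
    ((hξ1.const_mul γ₁).add (hξ3.const_mul (γ₁ * γ₂))) ht fun s hs => S.bc0 s hs
  have hp : derivFst S.v1 t 0 = S.v2 t 0 := S.pde1 t ht 0 (by simp)
  rw [hp, S.ode1 t ht, S.ode3 t ht] at h
  linear_combination h

lemma derivFst_v2_zero (hT : 0 < T) (ht : t ∈ Icc 0 T) :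
    derivFst S.v2 t 0 = γ₁ * (-ω ^ 2 * S.ξ1 t + derivSnd S.v1 t 0) :=
  ((hasDerivAt_derivFst (S.smooth_v2.differentiable (by simp)) t 0).eq_of_eqOn_Icc hT
    ((S.smooth_ξ2.differentiable (by simp) t).hasDerivAt.const_mul γ₁) ht
    fun _ hs => S.v2_zero hT hs).trans (congrArg (γ₁ * ·) (S.ode2 t ht))

lemma derivFst_derivSnd_v1_zero (ht : t ∈ Icc 0 T) :
    derivFst (derivSnd S.v1) t 0 = derivSnd S.v2 t 0 := by
  have hv1F : ContDiff ℝ 1 (Function.uncurry (derivFst S.v1)) :=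
    contDiff_uncurry_derivFst (n := 1) (by exact_mod_cast S.smooth_v1)
  rw [derivFst_derivSnd_comm S.smooth_v1]
  exact (hasDerivAt_derivSnd (hv1F.differentiable (by simp)) t 0).eq_of_eqOn_Icc one_pos
    (hasDerivAt_derivSnd (S.smooth_v2.differentiable (by simp)) t 0) (by simp)
    fun y hy => S.pde1 t ht y hy

end FwdObserverSol

/-- differentiated second-order energy identity: for a classical
solution of the forward observer system with `v¹, v²` of class `C³`,
`d/dt [½(∫₀¹(|∂ₜv²|² + |∂ₓv²|²) dx + γ₁|∂ₓv¹(t,0)|²)] = γ₁ω²·∂ₓv²(t,0)·ξ₁(t)`. -/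
theorem forward_second_order_energy_derivative
    (T ω γ₁ γ₂ : ℝ) (hT : 0 < T) (hγ₁ : 0 < γ₁) (hγ₂ : 0 < γ₂)
    (S : FwdObserverSol T ω γ₁ γ₂)
    (hv1 : ContDiff ℝ 3 (Function.uncurry S.v1))
    (hv2 : ContDiff ℝ 3 (Function.uncurry S.v2))
    (E : ℝ → ℝ)
    (hE : E = fun t =>
      (1 / 2) * ((∫ x in (0:ℝ)..1,
          ((deriv (fun s => S.v2 s x) t) ^ 2 + (deriv (fun y => S.v2 t y) x) ^ 2))
        + γ₁ * (deriv (fun y => S.v1 t y) 0) ^ 2)) :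
    ∀ t ∈ Icc (0:ℝ) T,
      HasDerivAt E (γ₁ * ω ^ 2 * deriv (fun y => S.v2 t y) 0 * S.ξ1 t) t := by
  intro t ht
  have hv2F : ContDiff ℝ 1 (Function.uncurry (derivFst S.v2)) :=
    contDiff_uncurry_derivFst (n := 1) (by exact_mod_cast S.smooth_v2)
  have hv2S : ContDiff ℝ 1 (Function.uncurry (derivSnd S.v2)) :=
    contDiff_uncurry_derivSnd (n := 1) (by exact_mod_cast S.smooth_v2)
  have hv1S : ContDiff ℝ 1 (Function.uncurry (derivSnd S.v1)) :=
    contDiff_uncurry_derivSnd (n := 1) (by exact_mod_cast S.smooth_v1)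
  have hF := fun s x => hasDerivAt_derivFst (hv2F.differentiable (by simp)) s x
  have hS := fun s x => hasDerivAt_derivFst (hv2S.differentiable (by simp)) s x
  have hFx := fun x => hasDerivAt_derivSnd (hv2F.differentiable (by simp)) t x
  have hSx := fun x => hasDerivAt_derivSnd (hv2S.differentiable (by simp)) t x
  have hdens : ContDiff ℝ 1
      (Function.uncurry fun s x => derivFst S.v2 s x ^ 2 + derivSnd S.v2 s x ^ 2) :=
    (hv2F.pow 2).add (hv2S.pow 2)
  have hcont : ∀ {g : ℝ → ℝ → ℝ}, ContDiff ℝ 1 (Function.uncurry g) →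
      Continuous (derivSnd g t) := fun hg =>
    (contDiff_uncurry_derivSnd (n := 0) (by simpa using hg)).continuous.comp
      (by fun_prop : Continuous fun x : ℝ => (t, x))
  have hint : ∫ x in (0 : ℝ)..1,
      derivFst (fun s x => derivFst S.v2 s x ^ 2 + derivSnd S.v2 s x ^ 2) t x =
      2 * (derivFst S.v2 t 1 * derivSnd S.v2 t 1 - derivFst S.v2 t 0 * derivSnd S.v2 t 0) := by
    rw [← intervalIntegral.integral_deriv_mul_eq_sub (fun x _ => hFx x) (fun x _ => hSx x)
      ((hcont hv2F).intervalIntegrable 0 1) ((hcont hv2S).intervalIntegrable 0 1),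
      ← intervalIntegral.integral_const_mul]
    refine intervalIntegral.integral_congr fun x hx => ?_
    rw [uIcc_of_le zero_le_one] at hx
    have h : derivFst (fun s x => derivFst S.v2 s x ^ 2 + derivSnd S.v2 s x ^ 2) t x = _ :=
      (((hF t x).pow 2).add ((hS t x).pow 2)).deriv
    simp only [h, S.derivFst_derivFst_v2 hT hv1 ht hx, derivFst_derivSnd_comm S.smooth_v2]
    push_cast
    ring
  have hE' := ((hasDerivAt_integral_derivFst hdens 0 1 t).add
    (((hasDerivAt_derivFst (hv1S.differentiable (by simp)) t 0).pow 2).const_mul γ₁)).const_mul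
      (1 / 2 : ℝ)
  rw [hint, S.derivFst_v2_one hT ht, S.derivFst_v2_zero hT ht,
    S.derivFst_derivSnd_v1_zero ht] at hE'
  rw [hE]
  refine hE'.congr_deriv ?_
  change _ = γ₁ * ω ^ 2 * derivSnd S.v2 t 0 * S.ξ1 t
  push_cast
  ring
end

section
/- Let T > 0 and let v : [0,T] × [0,1] → ℝ be of class C², satisfying ∂ₜₜv = ∂ₓₓv on [0,T] × [0,1] and v(t,1) = 0 for all t ∈ [0,T]. Then the following multiplier identity holds: (1/2)·( ∫₀ᵀ∫₀¹ |∂ₜv(t,x)|² dx dt − ∫₀ᵀ |∂ₜv(t,0)|² dt + ∫₀ᵀ∫₀¹ |∂ₓv(t,x)|² dx dt ) + ∫₀¹ (x−1)·∂ₓv(T,x)·∂ₜv(T,x) dx − ∫₀¹ (x−1)·∂ₓv(0,x)·∂ₜv(0,x) dx − (1/2)·∫₀ᵀ |∂ₓv(t,0)|² dt = 0. (This is the multiplier identity, obtained by multiplying the wave equation by (x−1)∂ₓv and integrating by parts, underlying the hidden regularity estimate of Lemma 2.) -/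
open Set Filter MeasureTheory intervalIntegral

theorem deriv_slice_fst {g : ℝ × ℝ → ℝ} (hg : Differentiable ℝ g) (t x : ℝ) :
    deriv (fun s => g (s, x)) t = fderiv ℝ g (t, x) (1, 0) :=
  ((hg (t, x)).hasFDerivAt.comp_hasDerivAt t
    ((hasDerivAt_id t).prodMk (hasDerivAt_const t x))).deriv

theorem deriv_slice_snd {g : ℝ × ℝ → ℝ} (hg : Differentiable ℝ g) (t x : ℝ) :
    deriv (fun y => g (t, y)) x = fderiv ℝ g (t, x) (0, 1) :=
  ((hg (t, x)).hasFDerivAt.comp_hasDerivAt x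
    ((hasDerivAt_const x t).prodMk (hasDerivAt_id x))).deriv

theorem fderiv_fderiv_apply_comm {E F : Type*} [NormedAddCommGroup E] [NormedSpace ℝ E]
    [NormedAddCommGroup F] [NormedSpace ℝ F] {u : E → F} (hu : ContDiff ℝ 2 u) (a b z : E) :
    fderiv ℝ (fun w => fderiv ℝ u w a) z b = fderiv ℝ (fun w => fderiv ℝ u w b) z a := by
  have hd : DifferentiableAt ℝ (fderiv ℝ u) z :=
    (hu.fderiv_right (m := 1) (by norm_num)).differentiable one_ne_zero z
  have apply_eq (c d : E) :
      fderiv ℝ (fun w => fderiv ℝ u w c) z d = fderiv ℝ (fderiv ℝ u) z d c := by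
    rw [fderiv_clm_apply hd (differentiableAt_const c)]
    simp
  rw [apply_eq, apply_eq]
  exact hu.contDiffAt.isSymmSndFDerivAt (by simp) b a

/-- The multiplier identity for the first-order system `∂ₜq = ∂ₓp`, `∂ₜp = ∂ₓq`, with
multiplier `x - 1`. -/
theorem multiplier_identity_first_order {T : ℝ} (hT : 0 ≤ T) {p q : ℝ × ℝ → ℝ}
    (hp : ContDiff ℝ 1 p) (hq : ContDiff ℝ 1 q)
    (hqp : ∀ z ∈ Icc (0 : ℝ) T ×ˢ Icc (0 : ℝ) 1, fderiv ℝ q z (1, 0) = fderiv ℝ p z (0, 1))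
    (hpq : ∀ z ∈ Icc (0 : ℝ) T ×ˢ Icc (0 : ℝ) 1, fderiv ℝ p z (1, 0) = fderiv ℝ q z (0, 1)) :
    (1 / 2) * ((∫ t in (0:ℝ)..T, ∫ x in (0:ℝ)..1, p (t, x) ^ 2)
        - (∫ t in (0:ℝ)..T, p (t, 0) ^ 2)
        + (∫ t in (0:ℝ)..T, ∫ x in (0:ℝ)..1, q (t, x) ^ 2))
      + (∫ x in (0:ℝ)..1, (x - 1) * q (T, x) * p (T, x))
      - (∫ x in (0:ℝ)..1, (x - 1) * q (0, x) * p (0, x))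
      - (1 / 2) * (∫ t in (0:ℝ)..T, q (t, 0) ^ 2) = 0 := by
  let f : ℝ × ℝ → ℝ := fun z => (z.2 - 1) * q z * p z
  let g : ℝ × ℝ → ℝ := fun z => -((z.2 - 1) * (p z ^ 2 + q z ^ 2) / 2)
  have hf : ContDiff ℝ 1 f := by fun_prop
  have hg : ContDiff ℝ 1 g := by fun_prop
  have hpd := hp.differentiable one_ne_zero
  have hqd := hq.differentiable one_ne_zero
  have hfd := hf.differentiable one_ne_zero
  have hgd := hg.differentiable one_ne_zero
  have hpc := hp.continuous
  have hqc := hq.continuous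
  have hdiv : ∀ t ∈ Icc (0 : ℝ) T, ∀ x ∈ Icc (0 : ℝ) 1,
      fderiv ℝ f (t, x) (1, 0) + fderiv ℝ g (t, x) (0, 1) =
        -(1 / 2) * (p (t, x) ^ 2 + q (t, x) ^ 2) := by
    intro t ht x hx
    have hft : fderiv ℝ f (t, x) (1, 0) =
        (x - 1) * fderiv ℝ q (t, x) (1, 0) * p (t, x) +
          (x - 1) * q (t, x) * fderiv ℝ p (t, x) (1, 0) := by
      have hps := ((hpd (t, x)).hasFDerivAt.comp_hasDerivAt t
        ((hasDerivAt_id t).prodMk (hasDerivAt_const t x)))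
      have hqs := ((hqd (t, x)).hasFDerivAt.comp_hasDerivAt t
        ((hasDerivAt_id t).prodMk (hasDerivAt_const t x)))
      rw [← deriv_slice_fst hfd]
      exact ((hqs.const_mul (x - 1)).mul hps).deriv
    have hgx : fderiv ℝ g (t, x) (0, 1) =
        -((1 * (p (t, x) ^ 2 + q (t, x) ^ 2) +
          (x - 1) * (2 * p (t, x) ^ (2 - 1) * fderiv ℝ p (t, x) (0, 1) +
            2 * q (t, x) ^ (2 - 1) * fderiv ℝ q (t, x) (0, 1))) / 2) := by
      have hps := ((hpd (t, x)).hasFDerivAt.comp_hasDerivAt x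
        ((hasDerivAt_const x t).prodMk (hasDerivAt_id x)))
      have hqs := ((hqd (t, x)).hasFDerivAt.comp_hasDerivAt x
        ((hasDerivAt_const x t).prodMk (hasDerivAt_id x)))
      rw [← deriv_slice_snd hgd]
      exact (((((hasDerivAt_id x).sub_const 1).mul
        ((hps.pow 2).add (hqs.pow 2))).div_const 2).neg).deriv
    rw [hft, hgx, hqp _ ⟨ht, hx⟩, hpq _ ⟨ht, hx⟩]
    ring
  have hdivergence := integral2_divergence_prod_of_hasFDerivAt f g (fderiv ℝ f) (fderiv ℝ g)
    0 0 T 1 hf.continuous.continuousOn hg.continuous.continuousOn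
    (fun z _ => (hfd z).hasFDerivAt) (fun z _ => (hgd z).hasFDerivAt)
    ((((hf.continuous_fderiv one_ne_zero).clm_apply continuous_const).add
      ((hg.continuous_fderiv one_ne_zero).clm_apply continuous_const)).continuousOn
      |>.integrableOn_compact (isCompact_uIcc.prod isCompact_uIcc))
  have hinterior : (∫ t in (0:ℝ)..T, ∫ x in (0:ℝ)..1,
      fderiv ℝ f (t, x) (1, 0) + fderiv ℝ g (t, x) (0, 1)) =
      -(1 / 2) * ((∫ t in (0:ℝ)..T, ∫ x in (0:ℝ)..1, p (t, x) ^ 2) +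
        ∫ t in (0:ℝ)..T, ∫ x in (0:ℝ)..1, q (t, x) ^ 2) := by
    rw [← intervalIntegral.integral_add, ← intervalIntegral.integral_const_mul]
    · refine intervalIntegral.integral_congr fun t ht => ?_
      rw [uIcc_of_le hT] at ht
      rw [← intervalIntegral.integral_add, ← intervalIntegral.integral_const_mul]
      · refine intervalIntegral.integral_congr fun x hx => ?_
        rw [uIcc_of_le zero_le_one] at hx
        exact hdiv t ht x hx
      · exact Continuous.intervalIntegrable (by fun_prop) _ _
      · exact Continuous.intervalIntegrable (by fun_prop) _ _
    · exact (intervalIntegral.continuous_parametric_intervalIntegral_of_continuous'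
        (by fun_prop) _ _).intervalIntegrable _ _
    · exact (intervalIntegral.continuous_parametric_intervalIntegral_of_continuous'
        (by fun_prop) _ _).intervalIntegrable _ _
  have hright : (∫ t in (0:ℝ)..T, g (t, 1)) = 0 := by simp [g]
  have hleft : (∫ t in (0:ℝ)..T, g (t, 0)) =
      (1 / 2) * ((∫ t in (0:ℝ)..T, p (t, 0) ^ 2) + ∫ t in (0:ℝ)..T, q (t, 0) ^ 2) := by
    rw [← intervalIntegral.integral_add, ← intervalIntegral.integral_const_mul]
    · refine intervalIntegral.integral_congr fun t _ => ?_
      simp only [g]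
      ring
    · exact Continuous.intervalIntegrable (by fun_prop) _ _
    · exact Continuous.intervalIntegrable (by fun_prop) _ _
  rw [hinterior, hright, hleft] at hdivergence
  simp only [f] at hdivergence
  linarith

/-- multiplier identity: for a `C²` solution of the homogeneous wave
equation on `[0,T] × [0,1]` vanishing at `x = 1`,
`½(∬|∂ₜv|² − ∫₀ᵀ|∂ₜv(t,0)|² + ∬|∂ₓv|²) + ∫₀¹(x−1)∂ₓv(T,x)∂ₜv(T,x)dx
 − ∫₀¹(x−1)∂ₓv(0,x)∂ₜv(0,x)dx − ½∫₀ᵀ|∂ₓv(t,0)|²dt = 0`. -/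
theorem multiplier_identity
    (T : ℝ) (hT : 0 < T)
    (v : ℝ → ℝ → ℝ) (hv : ContDiff ℝ 2 (Function.uncurry v))
    (hwave : ∀ t ∈ Icc (0:ℝ) T, ∀ x ∈ Icc (0:ℝ) 1,
      deriv (deriv (fun s => v s x)) t = deriv (deriv (fun y => v t y)) x)
    (hbc1 : ∀ t ∈ Icc (0:ℝ) T, v t 1 = 0) :
    (1 / 2) * ((∫ t in (0:ℝ)..T, ∫ x in (0:ℝ)..1, (deriv (fun s => v s x) t) ^ 2)
        - (∫ t in (0:ℝ)..T, (deriv (fun s => v s 0) t) ^ 2)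
        + (∫ t in (0:ℝ)..T, ∫ x in (0:ℝ)..1, (deriv (fun y => v t y) x) ^ 2))
      + (∫ x in (0:ℝ)..1, (x - 1) * deriv (fun y => v T y) x * deriv (fun s => v s x) T)
      - (∫ x in (0:ℝ)..1, (x - 1) * deriv (fun y => v 0 y) x * deriv (fun s => v s x) 0)
      - (1 / 2) * (∫ t in (0:ℝ)..T, (deriv (fun y => v t y) 0) ^ 2) = 0 := by
  have hd : Differentiable ℝ (Function.uncurry v) := hv.differentiable two_ne_zero
  have hfst (t x : ℝ) :
      deriv (fun s => v s x) t = fderiv ℝ (Function.uncurry v) (t, x) (1, 0) :=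
    deriv_slice_fst hd t x
  have hsnd (t x : ℝ) :
      deriv (fun y => v t y) x = fderiv ℝ (Function.uncurry v) (t, x) (0, 1) :=
    deriv_slice_snd hd t x
  have hpartial (c : ℝ × ℝ) : ContDiff ℝ 1 fun z => fderiv ℝ (Function.uncurry v) z c :=
    (hv.fderiv_right (by norm_num)).clm_apply contDiff_const
  have hwave' : ∀ z ∈ Icc (0 : ℝ) T ×ˢ Icc (0 : ℝ) 1,
      fderiv ℝ (fun w => fderiv ℝ (Function.uncurry v) w (1, 0)) z (1, 0) =
        fderiv ℝ (fun w => fderiv ℝ (Function.uncurry v) w (0, 1)) z (0, 1) := by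
    rintro ⟨t, x⟩ ⟨ht, hx⟩
    have hw := hwave t ht x hx
    rwa [funext fun s => hfst s x, funext fun y => hsnd t y,
      deriv_slice_fst ((hpartial (1, 0)).differentiable one_ne_zero),
      deriv_slice_snd ((hpartial (0, 1)).differentiable one_ne_zero)] at hw
  have hidentity := multiplier_identity_first_order hT.le (hpartial (1, 0)) (hpartial (0, 1))
    (fun z _ => fderiv_fderiv_apply_comm hv _ _ z) hwave'
  simpa only [hfst, hsnd] using hidentity
end

section
/- Let T ≥ 2 and let v : [0,T] × [0,1] → ℝ be of class C² and satisfy: ∂ₜₜv = ∂ₓₓv on [0,T] × [0,1]; v(t,1) = 0 and ∂ₓv(t,0) = 0 for all t ∈ [0,T]; and t ↦ v(t,0) is constant on [0,T]. Then v ≡ 0 on [0,T] × [0,1]. (This rigidity statement for the overdetermined wave system is the conclusion of the LaSalle-type argument in the proof of Theorem 2: on a time interval of length at least the minimal observability time 2, a solution with vanishing Neumann trace and constant Dirichlet trace at x = 0 must vanish identically.) -/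
open Set Filter MeasureTheory

/-- If the second derivative of `F` at `(b - a, w)` vanishes on a convex set, then the derivative of
`F` in direction `w` agrees at the endpoints `a`, `b`. -/
lemma fderiv_apply_eq_of_fderiv_fderiv_eq_zero {E : Type*} [NormedAddCommGroup E] [NormedSpace ℝ E]
    {F : E → ℝ} (hF : ContDiff ℝ 2 F) {R : Set E} (hR : Convex ℝ R) {a b w : E}
    (ha : a ∈ R) (hb : b ∈ R)
    (h : ∀ z ∈ R, fderiv ℝ (fderiv ℝ F) z (b - a) w = 0) :
    fderiv ℝ F b w = fderiv ℝ F a w := by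
  have hF' : Differentiable ℝ (fderiv ℝ F) :=
    (hF.fderiv_right (m := 1) (by norm_num)).differentiable (by norm_num)
  have hd : ∀ s : ℝ, HasDerivAt (fun s : ℝ => fderiv ℝ F (AffineMap.lineMap a b s) w)
      (fderiv ℝ (fderiv ℝ F) (AffineMap.lineMap a b s) (b - a) w) s := fun s =>
    ((hF' _).hasFDerivAt.comp_hasDerivAt s AffineMap.hasDerivAt_lineMap).clm_apply
      (hasDerivAt_const s w) |>.congr_deriv (by simp)
  have hc := constant_of_has_deriv_right_zero (a := 0) (b := 1)
    (fun s _ => (hd s).continuousAt.continuousWithinAt)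
    (fun s hs => (hd s).hasDerivWithinAt.congr_deriv
      (h _ (hR.lineMap_mem ha hb ⟨hs.1, hs.2.le⟩))) 1 (by simp)
  simpa using hc

/-- A function of one variable that is constant on `[0, T]` has zero derivative there. -/
lemma HasDerivAt.eq_zero_of_const_on_Icc {f : ℝ → ℝ} {f' T c t : ℝ} (hT : 0 < T)
    (ht : t ∈ Icc 0 T) (hc : ∀ s ∈ Icc 0 T, f s = c) (hf : HasDerivAt f f' t) : f' = 0 :=
  (uniqueDiffOn_Icc hT t ht).eq_deriv _ hf.hasDerivWithinAt
    ((hasDerivWithinAt_const t _ c).congr hc (hc t ht))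

lemma hasDerivAt_fst_slice {G : Type*} [NormedAddCommGroup G] [NormedSpace ℝ G]
    {F : ℝ × ℝ → G} {t x : ℝ} (hF : DifferentiableAt ℝ F (t, x)) :
    HasDerivAt (fun s => F (s, x)) (fderiv ℝ F (t, x) (1, 0)) t :=
  hF.hasFDerivAt.comp_hasDerivAt t ((hasDerivAt_id t).prodMk (hasDerivAt_const t x))

lemma hasDerivAt_snd_slice {G : Type*} [NormedAddCommGroup G] [NormedSpace ℝ G]
    {F : ℝ × ℝ → G} {t x : ℝ} (hF : DifferentiableAt ℝ F (t, x)) :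
    HasDerivAt (fun y => F (t, y)) (fderiv ℝ F (t, x) (0, 1)) x :=
  hF.hasFDerivAt.comp_hasDerivAt x ((hasDerivAt_const x t).prodMk (hasDerivAt_id x))

/-- rigidity of the overdetermined wave system: for `T ≥ 2`, a `C²`
solution of the homogeneous wave equation on `[0,T] × [0,1]` with `v(t,1) = 0`,
vanishing Neumann trace `∂ₓv(t,0) = 0`, and constant-in-time Dirichlet trace
`t ↦ v(t,0)`, vanishes identically on `[0,T] × [0,1]`. -/
theorem overdetermined_wave_rigidity
    (T : ℝ) (hT : 2 ≤ T)
    (v : ℝ → ℝ → ℝ) (hv : ContDiff ℝ 2 (Function.uncurry v))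
    (hwave : ∀ t ∈ Icc (0:ℝ) T, ∀ x ∈ Icc (0:ℝ) 1,
      deriv (deriv (fun s => v s x)) t = deriv (deriv (fun y => v t y)) x)
    (hbc1 : ∀ t ∈ Icc (0:ℝ) T, v t 1 = 0)
    (hneumann : ∀ t ∈ Icc (0:ℝ) T, deriv (fun y => v t y) 0 = 0)
    (hconst : ∀ t ∈ Icc (0:ℝ) T, ∀ t' ∈ Icc (0:ℝ) T, v t 0 = v t' 0) :
    ∀ t ∈ Icc (0:ℝ) T, ∀ x ∈ Icc (0:ℝ) 1, v t x = 0 := by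
  set F := Function.uncurry v
  have hT0 : 0 < T := by linarith
  have hF1 : Differentiable ℝ F := hv.differentiable (by norm_num)
  have hF2 : Differentiable ℝ (fderiv ℝ F) :=
    (hv.fderiv_right (m := 1) (by norm_num)).differentiable (by norm_num)
  have hdt : ∀ t x, HasDerivAt (fun s => v s x) (fderiv ℝ F (t, x) (1, 0)) t :=
    fun t x => hasDerivAt_fst_slice (hF1 (t, x))
  have hdx : ∀ t x, HasDerivAt (fun y => v t y) (fderiv ℝ F (t, x) (0, 1)) x :=
    fun t x => hasDerivAt_snd_slice (hF1 (t, x))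
  have hdtt : ∀ t x, deriv (deriv (fun s => v s x)) t
      = fderiv ℝ (fderiv ℝ F) (t, x) (1, 0) (1, 0) := fun t x => by
    rw [show deriv (fun s => v s x) = fun s => fderiv ℝ F (s, x) (1, 0) from
      funext fun s => (hdt s x).deriv]
    simpa using ((hasDerivAt_fst_slice (hF2 (t, x))).clm_apply
      (hasDerivAt_const t ((1, 0) : ℝ × ℝ))).deriv
  have hdxx : ∀ t x, deriv (deriv (fun y => v t y)) x
      = fderiv ℝ (fderiv ℝ F) (t, x) (0, 1) (0, 1) := fun t x => by
    rw [show deriv (fun y => v t y) = fun y => fderiv ℝ F (t, y) (0, 1) from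
      funext fun y => (hdx t y).deriv]
    simpa using ((hasDerivAt_snd_slice (hF2 (t, x))).clm_apply
      (hasDerivAt_const x ((0, 1) : ℝ × ℝ))).deriv
  have hsplit : ∀ a b : ℝ, ((a, b) : ℝ × ℝ) = a • ((1, 0) : ℝ × ℝ) + b • ((0, 1) : ℝ × ℝ) :=
    fun a b => by simp
  have hR : Convex ℝ (Icc (0:ℝ) T ×ˢ Icc (0:ℝ) 1) := (convex_Icc 0 T).prod (convex_Icc 0 1)
  have hzero : ∀ σ : ℝ, σ * σ = 1 → ∀ r : ℝ, ∀ z ∈ Icc (0:ℝ) T ×ˢ Icc (0:ℝ) 1,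
      fderiv ℝ (fderiv ℝ F) z (r, -σ * r) (1, σ) = 0 := by
    rintro σ hσ r ⟨t, x⟩ ⟨ht, hx⟩
    have hw := hwave t ht x hx
    rw [hdtt, hdxx] at hw
    have hs := (hv.contDiffAt (x := (t, x))).isSymmSndFDerivAt (by simp) (1, 0) (0, 1)
    rw [hsplit r, hsplit 1 σ]
    simp only [map_add, map_smul, add_apply, smul_apply,
      smul_eq_mul]
    rw [hw, hs]
    linear_combination (-r * fderiv ℝ (fderiv ℝ F) (t, x) (0, 1) (0, 1)) * hσ
  -- `∂ₜv + σ ∂ₓv` is constant along the characteristics `x + σ t = const`, for `σ = ±1`.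
  have hchar : ∀ σ : ℝ, σ * σ = 1 → ∀ t ∈ Icc (0:ℝ) T, ∀ x ∈ Icc (0:ℝ) 1,
      ∀ t' ∈ Icc (0:ℝ) T, ∀ x' ∈ Icc (0:ℝ) 1, x' - x = -σ * (t' - t) →
      fderiv ℝ F (t', x') (1, σ) = fderiv ℝ F (t, x) (1, σ) := by
    intro σ hσ t ht x hx t' ht' x' hx' h
    refine fderiv_apply_eq_of_fderiv_fderiv_eq_zero hv hR (mk_mem_prod ht hx)
      (mk_mem_prod ht' hx') fun z hz => ?_
    rw [Prod.mk_sub_mk, h]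
    exact hzero σ hσ _ z hz
  have hlin : ∀ z, ∀ σ : ℝ,
      fderiv ℝ F z (1, σ) = fderiv ℝ F z (1, 0) + σ * fderiv ℝ F z (0, 1) := fun z σ => by
    rw [hsplit 1 σ]; simp only [map_add, map_smul, smul_eq_mul, one_mul]
  have hleft : ∀ t ∈ Icc (0:ℝ) T, ∀ σ : ℝ, fderiv ℝ F (t, 0) (1, σ) = 0 := by
    intro t ht σ
    have h0 := (hdt t 0).eq_zero_of_const_on_Icc hT0 ht fun s hs => hconst s hs t ht
    have h1 := (hdx t 0).deriv.symm.trans (hneumann t ht)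
    rw [hlin, h0, h1]; ring
  have hright : ∀ t ∈ Icc (0:ℝ) T, fderiv ℝ F (t, 1) (1, 1) = -fderiv ℝ F (t, 1) (1, -1) := by
    intro t ht
    have h0 := (hdt t 1).eq_zero_of_const_on_Icc hT0 ht hbc1
    rw [hlin _ 1, hlin _ (-1), h0]; ring
  have h0 : (0:ℝ) ∈ Icc (0:ℝ) 1 := by simp
  have h1 : (1:ℝ) ∈ Icc (0:ℝ) 1 := by simp
  have hp : ∀ t ∈ Icc (0:ℝ) T, ∀ x ∈ Icc (0:ℝ) 1, t + x ≤ T →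
      fderiv ℝ F (t, x) (1, 1) = 0 := by
    intro t ht x hx h
    have ht' : t + x ∈ Icc (0:ℝ) T := ⟨by linarith [ht.1, hx.1], h⟩
    rw [hchar 1 (by norm_num) (t + x) ht' 0 h0 t ht x hx (by ring), hleft _ ht']
  have hq : ∀ t ∈ Icc (0:ℝ) T, ∀ x ∈ Icc (0:ℝ) 1, x ≤ t →
      fderiv ℝ F (t, x) (1, -1) = 0 := by
    intro t ht x hx h
    have ht' : t - x ∈ Icc (0:ℝ) T := ⟨by linarith, by linarith [ht.2, hx.1]⟩
    rw [hchar (-1) (by norm_num) (t - x) ht' 0 h0 t ht x hx (by ring), hleft _ ht']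
  have hdx0 : ∀ t ∈ Icc (0:ℝ) T, ∀ x ∈ Icc (0:ℝ) 1, fderiv ℝ F (t, x) (0, 1) = 0 := by
    intro t ht x hx
    have hp' : fderiv ℝ F (t, x) (1, 1) = 0 := by
      rcases le_total (t + x) T with h | h
      · exact hp t ht x hx h
      · have ht' : t + x - 1 ∈ Icc (0:ℝ) T := ⟨by linarith, by linarith [ht.2, hx.2]⟩
        rw [hchar 1 (by norm_num) (t + x - 1) ht' 1 h1 t ht x hx (by ring), hright _ ht',
          hq _ ht' 1 h1 (by linarith), neg_zero]
    have hq' : fderiv ℝ F (t, x) (1, -1) = 0 := by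
      rcases le_total x t with h | h
      · exact hq t ht x hx h
      · have ht' : t - x + 1 ∈ Icc (0:ℝ) T := ⟨by linarith [ht.1, hx.2], by linarith⟩
        rw [hchar (-1) (by norm_num) (t - x + 1) ht' 1 h1 t ht x hx (by ring),
          ← neg_eq_zero, ← hright _ ht', hp _ ht' 1 h1 (by linarith)]
    rw [hlin] at hp' hq'
    linarith
  intro t ht x hx
  have hc := constant_of_has_deriv_right_zero (f := fun y => v t y) (a := 0) (b := 1)
    (fun y _ => (hdx t y).continuousAt.continuousWithinAt)
    (fun y hy => (hdx t y).hasDerivWithinAt.congr_deriv (hdx0 t ht y ⟨hy.1, hy.2.le⟩))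
  exact (hc x hx).trans ((hc 1 h1).symm.trans (hbc1 t ht))
end
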